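/- arXiv:2508.12624 — 2 statements merged into one kernel-verified Lean document; each statement's English description precedes it below -/
import Mathlib

section
/- Let Λ be a symplectic lattice admitting an orthogonal direct sum decomposition Λ = U₁ ⊕ U₂ ⊕ Λ'' with U₁, U₂ isometric to U (i.e., of type with d₁ = d₂ = 1). Then the assignment v ↦ [v*] induces a bijection from the set of Γ_Λ-equivalence classes of primitive vectors of Λ onto the discriminant group D_Λ. -/
noncomputable section

open Submodule

variable {V : Type} [AddCommGroup V] [Module ℚ V]

/-- The dual lattice `Λ^∨ = {v ∈ Λ⊗ℚ : (v, Λ) ⊆ ℤ}` of a lattice `L` (inside the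
ambient rational vector space `V = Λ⊗ℚ`) with respect to the form `B`. -/
def dualLattice (B : V →ₗ[ℚ] V →ₗ[ℚ] ℚ) (L : Submodule ℤ V) : Submodule ℤ V where
  carrier := {v : V | ∀ x ∈ L, ∃ n : ℤ, B v x = (n : ℚ)}
  zero_mem' := fun x _ => ⟨0, by simp⟩
  add_mem' := by
    intro a b ha hb x hx
    obtain ⟨n, hn⟩ := ha x hx
    obtain ⟨m, hm⟩ := hb x hx
    exact ⟨n + m, by rw [map_add, LinearMap.add_apply, hn, hm]; push_cast; ring⟩
  smul_mem' := by
    intro c a ha x hx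
    obtain ⟨n, hn⟩ := ha x hx
    refine ⟨c * n, ?_⟩
    have h1 : B (c • a) x = (B.flip x) (c • a) := rfl
    rw [h1, map_zsmul, LinearMap.flip_apply, hn, zsmul_eq_mul]
    push_cast; ring

/-- A vector `v` is primitive in the lattice `L` if `ℚv ∩ L = ℤv`. -/
def IsPrimitive (L : Submodule ℤ V) (v : V) : Prop :=
  v ∈ L ∧ (Submodule.span ℚ {v}).restrictScalars ℤ ⊓ L = Submodule.span ℤ {v}

/-- `div(v) = d`, i.e. the ideal `(v, L) ⊆ ℤ` is generated by the positive integer `d`. -/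
def HasDiv (B : V →ₗ[ℚ] V →ₗ[ℚ] ℚ) (L : Submodule ℤ V) (v : V) (d : ℕ) : Prop :=
  0 < d ∧ (∀ x ∈ L, ∃ n : ℤ, B v x = (n : ℚ) * (d : ℚ)) ∧ (∃ x ∈ L, B v x = (d : ℚ))

/-- `v* = v / div(v)`. -/
def vstar (v : V) (d : ℕ) : V := ((d : ℚ))⁻¹ • v

lemma vstar_mem {B : V →ₗ[ℚ] V →ₗ[ℚ] ℚ} {L : Submodule ℤ V} {v : V} {d : ℕ}
    (h : HasDiv B L v d) : vstar v d ∈ dualLattice B L := by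
  intro x hx
  obtain ⟨n, hn⟩ := h.2.1 x hx
  refine ⟨n, ?_⟩
  have hd : (d : ℚ) ≠ 0 := Nat.cast_ne_zero.mpr h.1.ne'
  show B (((d : ℚ))⁻¹ • v) x = (n : ℚ)
  rw [map_smul, LinearMap.smul_apply, hn, smul_eq_mul]
  field_simp

/-- The discriminant group `D_Λ = Λ^∨ / Λ`. -/
abbrev DiscGroup (B : V →ₗ[ℚ] V →ₗ[ℚ] ℚ) (L : Submodule ℤ V) :=
  dualLattice B L ⧸ (L.comap (dualLattice B L).subtype)

/-- The class of an element of the dual lattice in the discriminant group. -/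
def discCls (B : V →ₗ[ℚ] V →ₗ[ℚ] ℚ) (L : Submodule ℤ V) (v : dualLattice B L) :
    DiscGroup B L := Submodule.Quotient.mk v

/-- `γ` is an isometry of the lattice `L`, i.e. an element of `Sp(Λ)` (viewed as a
rational linear automorphism of the ambient space preserving `L` and the form). -/
def IsIsometry (B : V →ₗ[ℚ] V →ₗ[ℚ] ℚ) (L : Submodule ℤ V) (γ : V ≃ₗ[ℚ] V) : Prop :=
  (∀ v, v ∈ L ↔ γ v ∈ L) ∧ ∀ v w, B (γ v) (γ w) = B v w

/-- `γ` lies in `Γ_Λ`: it is an isometry of `L` acting trivially on the discriminant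
group, i.e. `γ(v) ≡ v mod Λ` for every `v ∈ Λ^∨`. -/
def InGamma (B : V →ₗ[ℚ] V →ₗ[ℚ] ℚ) (L : Submodule ℤ V) (γ : V ≃ₗ[ℚ] V) : Prop :=
  IsIsometry B L γ ∧ ∀ v ∈ dualLattice B L, γ v - v ∈ L

lemma isometry_dual_mem {B : V →ₗ[ℚ] V →ₗ[ℚ] ℚ} {L : Submodule ℤ V} {γ : V ≃ₗ[ℚ] V}
    (h : IsIsometry B L γ) {u : V} (hu : u ∈ dualLattice B L) :
    γ u ∈ dualLattice B L := by
  intro x hx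
  have hx' : γ.symm x ∈ L := by
    rw [h.1 (γ.symm x), LinearEquiv.apply_symm_apply]
    exact hx
  obtain ⟨n, hn⟩ := hu (γ.symm x) hx'
  refine ⟨n, ?_⟩
  have := h.2 u (γ.symm x)
  rw [LinearEquiv.apply_symm_apply] at this
  rw [this, hn]

/-- The transvection `T_{l,m} : v ↦ v + (l,v)m + (m,v)l` on the rational vector space. -/
def transvection (B : V →ₗ[ℚ] V →ₗ[ℚ] ℚ) (l m : V) : V →ₗ[ℚ] V :=
  LinearMap.id + (B l).smulRight m + (B m).smulRight l

/-- An orthogonal decomposition `Λ = U ⊕ Λ'` with `U` a hyperbolic plane spanned by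
`e, f` with `(e,f) = 1`. -/
def OrthoDecompU (B : V →ₗ[ℚ] V →ₗ[ℚ] ℚ) (L : Submodule ℤ V)
    (e f : V) (L' : Submodule ℤ V) : Prop :=
  e ∈ L ∧ f ∈ L ∧ L' ≤ L ∧ B e f = 1 ∧
  (∀ z ∈ L', B e z = 0 ∧ B f z = 0) ∧
  Submodule.span ℤ {e, f} ⊔ L' = L

/-- An orthogonal decomposition `Λ = U₁ ⊕ U₂ ⊕ Λ''` with `U₁, U₂` hyperbolic planes. -/
def OrthoDecompUU (B : V →ₗ[ℚ] V →ₗ[ℚ] ℚ) (L : Submodule ℤ V)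
    (e₁ f₁ e₂ f₂ : V) (L'' : Submodule ℤ V) : Prop :=
  e₁ ∈ L ∧ f₁ ∈ L ∧ e₂ ∈ L ∧ f₂ ∈ L ∧ L'' ≤ L ∧
  B e₁ f₁ = 1 ∧ B e₂ f₂ = 1 ∧
  B e₁ e₂ = 0 ∧ B e₁ f₂ = 0 ∧ B f₁ e₂ = 0 ∧ B f₁ f₂ = 0 ∧
  (∀ z ∈ L'', B e₁ z = 0 ∧ B f₁ z = 0 ∧ B e₂ z = 0 ∧ B f₂ z = 0) ∧
  Submodule.span ℤ {e₁, f₁} ⊔ Submodule.span ℤ {e₂, f₂} ⊔ L'' = L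

/-- An orthogonal decomposition `Λ = U ⊕ U(p) ⊕ ⋯ ⊕ U(p)`. -/
def OrthoDecompUUp (B : V →ₗ[ℚ] V →ₗ[ℚ] ℚ) (L : Submodule ℤ V) (p : ℕ)
    (e f : V) {ι : Type} (E F : ι → V) : Prop :=
  e ∈ L ∧ f ∈ L ∧ (∀ i, E i ∈ L) ∧ (∀ i, F i ∈ L) ∧
  B e f = 1 ∧ (∀ i, B (E i) (F i) = (p : ℚ)) ∧
  (∀ i, B e (E i) = 0 ∧ B e (F i) = 0 ∧ B f (E i) = 0 ∧ B f (F i) = 0) ∧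
  (∀ i j, i ≠ j → B (E i) (E j) = 0 ∧ B (E i) (F j) = 0 ∧ B (F i) (F j) = 0) ∧
  Submodule.span ℤ ({e, f} ∪ Set.range E ∪ Set.range F) = L

/-- An orthogonal decomposition `Λ = U(d₁) ⊕ ⋯ ⊕ U(d_g)`. -/
def OrthoDecompType (B : V →ₗ[ℚ] V →ₗ[ℚ] ℚ) (L : Submodule ℤ V) {g : ℕ}
    (d : Fin g → ℕ) (E F : Fin g → V) : Prop :=
  (∀ i, E i ∈ L) ∧ (∀ i, F i ∈ L) ∧
  (∀ i, B (E i) (F i) = (d i : ℚ)) ∧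
  (∀ i j, i ≠ j → B (E i) (E j) = 0 ∧ B (E i) (F j) = 0 ∧ B (F i) (F j) = 0) ∧
  Submodule.span ℤ (Set.range E ∪ Set.range F) = L

lemma coe_int_addCircle (n : ℤ) : (((n : ℚ) : AddCircle (1 : ℚ))) = 0 := by
  have hmem : ((n : ℚ)) ∈ AddSubgroup.zmultiples (1 : ℚ) := ⟨n, by simp⟩
  exact (QuotientAddGroup.eq_zero_iff _).mpr hmem

lemma bilin_antisymm (B : V →ₗ[ℚ] V →ₗ[ℚ] ℚ) (halt : ∀ v, B v v = 0) (a b : V) :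
    B a b = - B b a := by
  have h := halt (a + b)
  simp only [map_add, LinearMap.add_apply] at h
  rw [halt a, halt b] at h
  linarith

/-- The `ℚ/ℤ`-valued pairing on the dual lattice. -/
def rationalPairing (B : V →ₗ[ℚ] V →ₗ[ℚ] ℚ) (L : Submodule ℤ V) :
    dualLattice B L →ₗ[ℤ] dualLattice B L →ₗ[ℤ] AddCircle (1 : ℚ) :=
  LinearMap.mk₂ ℤ (fun v w => ((B v.1 w.1 : ℚ) : AddCircle (1 : ℚ)))
    (fun v v' w => by
      beta_reduce
      rw [Submodule.coe_add, map_add, LinearMap.add_apply]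
      exact QuotientAddGroup.mk_add (AddSubgroup.zmultiples (1 : ℚ)) _ _)
    (fun c v w => by
      beta_reduce
      have h1 : B ((c • v : dualLattice B L) : V) (w : V)
          = c • (B (v : V) (w : V)) := by
        have h2 : B ((c • v : dualLattice B L) : V) (w : V)
            = (B.flip (w : V)) ((c • v : dualLattice B L) : V) := rfl
        rw [h2, Submodule.coe_smul, map_zsmul, LinearMap.flip_apply]
      rw [h1]
      exact QuotientAddGroup.mk_zsmul (AddSubgroup.zmultiples (1 : ℚ)) _ _
    )
    (fun v w w' => by
      beta_reduce
      rw [Submodule.coe_add, map_add]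
      exact QuotientAddGroup.mk_add (AddSubgroup.zmultiples (1 : ℚ)) _ _)
    (fun c v w => by
      beta_reduce
      rw [Submodule.coe_smul, map_zsmul]
      exact QuotientAddGroup.mk_zsmul (AddSubgroup.zmultiples (1 : ℚ)) _ _)

/-- The discriminant form on `D_Λ`, with values in `ℚ/ℤ`. -/
def discForm (B : V →ₗ[ℚ] V →ₗ[ℚ] ℚ) (L : Submodule ℤ V) (halt : ∀ v, B v v = 0) :
    DiscGroup B L →ₗ[ℤ] DiscGroup B L →ₗ[ℤ] AddCircle (1 : ℚ) :=
  (Submodule.liftQ _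
    ((Submodule.liftQ _ (rationalPairing B L) (by
      intro v hv
      rw [LinearMap.mem_ker]
      refine LinearMap.ext fun w => ?_
      have hv' : (v : V) ∈ L := hv
      obtain ⟨n, hn⟩ := w.2 (v : V) hv'
      show ((B (v : V) (w : V) : ℚ) : AddCircle (1 : ℚ)) = 0
      have h3 : B (v : V) (w : V) = ((-n : ℤ) : ℚ) := by
        rw [bilin_antisymm B halt, hn]; push_cast; ring
      rw [h3]
      exact coe_int_addCircle _)).flip) (by
      intro w hw
      rw [LinearMap.mem_ker]
      refine LinearMap.ext fun x => ?_
      obtain ⟨v, rfl⟩ := Submodule.Quotient.mk_surjective _ x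
      have hw' : (w : V) ∈ L := hw
      obtain ⟨n, hn⟩ := v.2 (w : V) hw'
      show ((B (v : V) (w : V) : ℚ) : AddCircle (1 : ℚ)) = 0
      rw [hn]
      exact coe_int_addCircle _)).flip

/-- The orthogonal complement of a subgroup of the discriminant group with respect to
the discriminant form. -/
def discOrth (B : V →ₗ[ℚ] V →ₗ[ℚ] ℚ) (L : Submodule ℤ V) (halt : ∀ v, B v v = 0)
    (D' : Submodule ℤ (DiscGroup B L)) : Submodule ℤ (DiscGroup B L) :=
  ⨅ y ∈ D', LinearMap.ker ((discForm B L halt).flip y)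

/-- A splitting element of the discriminant group: `x` of order `d` lies in a subgroup
`D' ≅ (ℤ/d)²` with `D_Λ = D' ⊕ D'^⊥`. -/
def IsSplitElem (B : V →ₗ[ℚ] V →ₗ[ℚ] ℚ) (L : Submodule ℤ V) (halt : ∀ v, B v v = 0)
    (x : DiscGroup B L) : Prop :=
  ∃ D' : Submodule ℤ (DiscGroup B L), x ∈ D' ∧
    Nonempty (D' ≃+ (ZMod (addOrderOf x) × ZMod (addOrderOf x))) ∧
    D' ⊔ discOrth B L halt D' = ⊤ ∧ D' ⊓ discOrth B L halt D' = ⊥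

/-- The orthogonal complement `Λ₁^⊥ = {z ∈ Λ : (z, Λ₁) = 0}` of a sublattice inside `L`. -/
def orthCompIn (B : V →ₗ[ℚ] V →ₗ[ℚ] ℚ) (L L₁ : Submodule ℤ V) : Submodule ℤ V where
  carrier := {z | z ∈ L ∧ ∀ y ∈ L₁, B z y = 0}
  zero_mem' := ⟨L.zero_mem, fun y _ => by simp⟩
  add_mem' := by
    intro a b ha hb
    refine ⟨L.add_mem ha.1 hb.1, fun y hy => ?_⟩
    rw [map_add, LinearMap.add_apply, ha.2 y hy, hb.2 y hy, add_zero]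
  smul_mem' := by
    intro c a ha
    refine ⟨L.smul_mem c ha.1, fun y hy => ?_⟩
    have h1 : B (c • a) y = (B.flip y) (c • a) := rfl
    rw [h1, map_zsmul, LinearMap.flip_apply, ha.2 y hy, smul_zero]

/-- A splitting (primitive) vector: `v` lies in a rank 2 sublattice `Λ₁` with
`Λ = Λ₁ ⊕ Λ₁^⊥` (orthogonal direct sum). -/
def IsSplitVec (B : V →ₗ[ℚ] V →ₗ[ℚ] ℚ) (L : Submodule ℤ V) (v : V) : Prop :=
  ∃ L₁ : Submodule ℤ V, v ∈ L₁ ∧ L₁ ≤ L ∧ Module.finrank ℤ L₁ = 2 ∧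
    L₁ ⊔ orthCompIn B L L₁ = L ∧ L₁ ⊓ orthCompIn B L L₁ = ⊥

end

/-!
The map `v ↦ v*` identifies the primitive vectors of `Λ` with the vectors of `Λ^∨` of
divisibility `1`; the inverse sends `u` to `m u`, with `m` the order of `[u]` in `D_Λ`. It remains
to see that two vectors `u, w ∈ Λ^∨` of divisibility `1` with `w - u ∈ Λ` are `Γ_Λ`-equivalent.
Transvections along vectors of `Λ` lie in `Γ_Λ`. Those along `e` and `f`, with `(e, f) = 1`, run the
Euclidean algorithm on `((f, u), (e, u))` and make `u` orthogonal to `e`; one more transvection then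
achieves `(f, u) = 1`. Once `(f, u) = (f, w) = 1`, a transvection along `w - u` corrected by a
multiple of `f` takes `u` to `w` up to a multiple of `f`, which a power of `T_f` removes.
-/

section SymplecticLattice

variable {V : Type} [AddCommGroup V] [Module ℚ V] {B : V →ₗ[ℚ] V →ₗ[ℚ] ℚ} {L : Submodule ℤ V}

section Divisibility

variable {v : V} {d : ℕ}

lemma HasDiv.natCast_ne_zero (h : HasDiv B L v d) : (d : ℚ) ≠ 0 :=
  Nat.cast_ne_zero.mpr h.1.ne'

lemma hasDiv_one_iff : HasDiv B L v 1 ↔ v ∈ dualLattice B L ∧ ∃ x ∈ L, B v x = 1 := by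
  simp [HasDiv, dualLattice]

lemma HasDiv.dvd {d' : ℕ} (h : HasDiv B L v d) (h' : HasDiv B L v d') : d ∣ d' := by
  obtain ⟨x, hx, hvx⟩ := h'.2.2
  obtain ⟨n, hn⟩ := h.2.1 x hx
  have hd' : (d' : ℤ) = n * d := by exact_mod_cast hvx.symm.trans hn
  exact Int.natCast_dvd_natCast.mp (Dvd.intro_left n hd'.symm)

lemma HasDiv.unique {d' : ℕ} (h : HasDiv B L v d) (h' : HasDiv B L v d') : d = d' :=
  Nat.dvd_antisymm (h.dvd h') (h'.dvd h)

lemma HasDiv.map_isometry {γ : V ≃ₗ[ℚ] V} (h : HasDiv B L v d) (hγ : IsIsometry B L γ) :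
    HasDiv B L (γ v) d := by
  obtain ⟨hd, hdvd, x, hx, hvx⟩ := h
  refine ⟨hd, fun y hy => ?_, γ x, (hγ.1 x).mp hx, (hγ.2 v x).trans hvx⟩
  have hy' : γ.symm y ∈ L := (hγ.1 _).mpr (by rwa [γ.apply_symm_apply])
  simpa only [← hγ.2 v, γ.apply_symm_apply] using hdvd _ hy'

lemma HasDiv.vstar_apply {x : V} (h : HasDiv B L v d) (hvx : B v x = d) :
    B (vstar v d) x = 1 := by
  rw [vstar, map_smul, LinearMap.smul_apply, hvx, smul_eq_mul, inv_mul_cancel₀ h.natCast_ne_zero]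

lemma HasDiv.hasDiv_one_vstar (h : HasDiv B L v d) : HasDiv B L (vstar v d) 1 := by
  obtain ⟨x, hx, hvx⟩ := h.2.2
  exact hasDiv_one_iff.mpr ⟨vstar_mem h, x, hx, h.vstar_apply hvx⟩

lemma HasDiv.nsmul_vstar (h : HasDiv B L v d) : d • vstar v d = v := by
  rw [vstar, ← Nat.cast_smul_eq_nsmul ℚ, smul_inv_smul₀ h.natCast_ne_zero]

lemma HasDiv.nsmul (h : HasDiv B L v d) {m : ℕ} (hm : 0 < m) : HasDiv B L (m • v) (m * d) := by
  obtain ⟨hd, hdvd, x, hx, hvx⟩ := h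
  refine ⟨Nat.mul_pos hm hd, fun y hy => ?_, x, hx, by simp [hvx]⟩
  obtain ⟨n, hn⟩ := hdvd y hy
  exact ⟨n, by simp [hn, mul_left_comm]⟩

lemma vstar_nsmul (hd : 0 < d) : vstar (d • v) d = v := by
  rw [vstar, ← Nat.cast_smul_eq_nsmul ℚ, inv_smul_smul₀ (Nat.cast_ne_zero.mpr hd.ne')]

lemma map_vstar (γ : V ≃ₗ[ℚ] V) : γ (vstar v d) = vstar (γ v) d :=
  map_smul γ _ v

end Divisibility

section DiscriminantOrder

lemma discCls_eq_iff {u w : dualLattice B L} :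
    discCls B L u = discCls B L w ↔ (w : V) - u ∈ L := by
  rw [eq_comm]
  exact Submodule.Quotient.eq _

lemma zsmul_discCls_eq_zero_iff {u : dualLattice B L} {n : ℤ} :
    n • discCls B L u = 0 ↔ n • (u : V) ∈ L :=
  Submodule.Quotient.mk_eq_zero (L.comap (dualLattice B L).subtype) (x := n • u)

lemma IsPrimitive.addOrderOf_discCls_vstar {v : V} {d : ℕ} (hv : IsPrimitive L v)
    (hd : HasDiv B L v d) : addOrderOf (discCls B L ⟨vstar v d, vstar_mem hd⟩) = d := by
  refine Nat.dvd_right_iff_eq.mp fun n => ?_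
  rw [addOrderOf_dvd_iff_nsmul_eq_zero, ← natCast_zsmul, zsmul_discCls_eq_zero_iff, natCast_zsmul]
  refine ⟨fun hn => ?_, ?_⟩
  · have hn_span : n • vstar v d ∈ Submodule.span ℤ {v} := by
      rw [← hv.2]
      refine ⟨Submodule.mem_span_singleton.mpr ⟨n * (d : ℚ)⁻¹, ?_⟩, hn⟩
      rw [vstar, mul_smul, Nat.cast_smul_eq_nsmul]
    obtain ⟨m, hm⟩ := Submodule.mem_span_singleton.mp hn_span
    obtain ⟨x, -, hvx⟩ := hd.2.2
    have hmd : (m * d : ℚ) = n := by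
      simpa [hvx, hd.vstar_apply hvx] using congrArg (B · x) hm
    exact Int.natCast_dvd_natCast.mp (Dvd.intro_left m (by exact_mod_cast hmd))
  · rintro ⟨k, rfl⟩
    rw [mul_comm, mul_nsmul', hd.nsmul_vstar]
    exact L.nsmul_mem hv.1 k

lemma isOfFinAddOrder_discCls (hspan : Submodule.span ℚ (L : Set V) = ⊤) (u : dualLattice B L) :
    IsOfFinAddOrder (discCls B L u) := by
  obtain ⟨⟨n, hn⟩, hnu⟩ := multiple_mem_span_of_mem_localization_span (nonZeroDivisors ℤ) ℚ
    (L : Set V) (u : V) (hspan ▸ Submodule.mem_top)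
  rw [Submodule.span_eq] at hnu
  exact isOfFinAddOrder_iff_zsmul_eq_zero.mpr
    ⟨n, nonZeroDivisors.ne_zero hn, zsmul_discCls_eq_zero_iff.mpr hnu⟩

lemma isPrimitive_addOrderOf_nsmul (hint : L ≤ dualLattice B L) {u : dualLattice B L}
    (hu : HasDiv B L u 1) : IsPrimitive L (addOrderOf (discCls B L u) • (u : V)) := by
  set d := addOrderOf (discCls B L u)
  have hdu : d • (u : V) ∈ L := by
    rw [← natCast_zsmul, ← zsmul_discCls_eq_zero_iff, natCast_zsmul]
    exact addOrderOf_nsmul_eq_zero _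
  refine ⟨hdu, le_antisymm ?_ (Submodule.span_singleton_le_iff_mem _ _ |>.mpr
    ⟨Submodule.mem_span_singleton_self _, hdu⟩)⟩
  rintro y ⟨hy_span, hyL⟩
  obtain ⟨q, rfl⟩ := Submodule.mem_span_singleton.mp hy_span
  obtain ⟨-, x, hx, hux⟩ := hasDiv_one_iff.mp hu
  obtain ⟨n, hn⟩ := hint hyL x hx
  have hqd : q * d = n := by simpa [hux] using hn
  have hqdu : q • d • (u : V) = n • (u : V) := by
    rw [← Nat.cast_smul_eq_nsmul ℚ, smul_smul, hqd, Int.cast_smul_eq_zsmul]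
  obtain ⟨k, rfl⟩ : (d : ℤ) ∣ n := by
    rw [addOrderOf_dvd_iff_zsmul_eq_zero, zsmul_discCls_eq_zero_iff, ← hqdu]
    exact hyL
  rw [hqdu]
  exact Submodule.mem_span_singleton.mpr ⟨k, by rw [mul_comm, mul_zsmul, natCast_zsmul]⟩

lemma exists_isPrimitive_vstar_eq (hspan : Submodule.span ℚ (L : Set V) = ⊤)
    (hint : L ≤ dualLattice B L) {u : V} (hu : HasDiv B L u 1) :
    ∃ (v : V) (d : ℕ), IsPrimitive L v ∧ HasDiv B L v d ∧ vstar v d = u := by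
  let u' : dualLattice B L := ⟨u, (hasDiv_one_iff.mp hu).1⟩
  have hd : 0 < addOrderOf (discCls B L u') := (isOfFinAddOrder_discCls hspan u').addOrderOf_pos
  exact ⟨_, _, isPrimitive_addOrderOf_nsmul hint (u := u') hu, by simpa using hu.nsmul hd,
    vstar_nsmul hd⟩

end DiscriminantOrder

section Gamma

lemma IsIsometry.symm {γ : V ≃ₗ[ℚ] V} (hγ : IsIsometry B L γ) : IsIsometry B L γ.symm :=
  ⟨fun v => by rw [hγ.1 (γ.symm v), γ.apply_symm_apply],
    fun v w => by rw [← hγ.2, γ.apply_symm_apply, γ.apply_symm_apply]⟩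

variable (B L) in
/-- The group `Γ_Λ`, realised inside `GL(Λ ⊗ ℚ)`. Its orbits on `V` are the `Γ_Λ`-equivalence
classes. -/
def gammaSubgroup : Subgroup (V ≃ₗ[ℚ] V) where
  carrier := {γ | InGamma B L γ}
  one_mem' := ⟨⟨fun _ => Iff.rfl, fun _ _ => rfl⟩, fun v _ => by simp⟩
  mul_mem' {γ δ} hγ hδ := by
    refine ⟨⟨fun v => (hδ.1.1 v).trans (hγ.1.1 _), fun v w => (hγ.1.2 _ _).trans (hδ.1.2 v w)⟩,
      fun v hv => ?_⟩
    rw [LinearEquiv.mul_apply, ← sub_add_sub_cancel _ (δ v)]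
    exact L.add_mem (hγ.2 _ (isometry_dual_mem hδ.1 hv)) (hδ.2 v hv)
  inv_mem' {γ} hγ := by
    refine ⟨hγ.1.symm, fun v hv => ?_⟩
    have h := hγ.2 _ (isometry_dual_mem hγ.1.symm hv)
    rw [γ.apply_symm_apply] at h
    exact sub_mem_comm_iff.mp h

variable {u w : V}

lemma mem_orbit_gammaSubgroup_iff :
    w ∈ MulAction.orbit (gammaSubgroup B L) u ↔ ∃ γ, InGamma B L γ ∧ γ u = w :=
  ⟨fun ⟨γ, hγ⟩ => ⟨γ.1, γ.2, hγ⟩, fun ⟨γ, hγ, h⟩ => ⟨⟨γ, hγ⟩, h⟩⟩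

lemma hasDiv_of_mem_orbit {d : ℕ} (hw : w ∈ MulAction.orbit (gammaSubgroup B L) u)
    (hu : HasDiv B L u d) : HasDiv B L w d := by
  obtain ⟨γ, hγ, rfl⟩ := mem_orbit_gammaSubgroup_iff.mp hw
  exact hu.map_isometry hγ.1

lemma mem_dualLattice_of_mem_orbit (hw : w ∈ MulAction.orbit (gammaSubgroup B L) u)
    (hu : u ∈ dualLattice B L) : w ∈ dualLattice B L := by
  obtain ⟨γ, hγ, rfl⟩ := mem_orbit_gammaSubgroup_iff.mp hw
  exact isometry_dual_mem hγ.1 hu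

lemma sub_mem_of_mem_orbit (hw : w ∈ MulAction.orbit (gammaSubgroup B L) u)
    (hu : u ∈ dualLattice B L) : w - u ∈ L := by
  obtain ⟨γ, hγ, rfl⟩ := mem_orbit_gammaSubgroup_iff.mp hw
  exact hγ.2 u hu

end Gamma

section Transvection

variable {l u w : V}

/-- The `k`-th power `v ↦ v + k (l, v) l` of the symplectic transvection along `l`. -/
def symplecticTransvection (halt : B.IsAlt) (l : V) (k : ℤ) : V ≃ₗ[ℚ] V :=
  LinearEquiv.transvection (f := B l) (v := k • l) (by rw [map_zsmul, halt l, smul_zero])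

lemma symplecticTransvection_apply (halt : B.IsAlt) (k : ℤ) (v : V) :
    symplecticTransvection halt l k v = v + B l v • k • l :=
  rfl

lemma apply_symplecticTransvection (halt : B.IsAlt) (k : ℤ) (v : V) :
    B l (symplecticTransvection halt l k v) = B l v := by
  simp [symplecticTransvection_apply, halt l]

lemma exists_intCast_eq_apply (halt : B.IsAlt) (hl : l ∈ L) (hu : u ∈ dualLattice B L) :
    ∃ n : ℤ, B l u = n := by
  obtain ⟨n, hn⟩ := hu l hl
  exact ⟨-n, by rw [← halt.neg, hn, Int.cast_neg]⟩

lemma symplecticTransvection_sub_mem (halt : B.IsAlt) (hl : l ∈ L) (k : ℤ) {n : ℤ}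
    (hn : B l u = n) : symplecticTransvection halt l k u - u ∈ L := by
  rw [symplecticTransvection_apply, add_sub_cancel_left, hn, Int.cast_smul_eq_zsmul]
  exact L.smul_mem n (L.smul_mem k hl)

lemma inGamma_symplecticTransvection (halt : B.IsAlt) (hint : L ≤ dualLattice B L) (hl : l ∈ L)
    (k : ℤ) : InGamma B L (symplecticTransvection halt l k) := by
  refine ⟨⟨fun v => ⟨fun hv => ?_, fun hv => ?_⟩, fun v w => ?_⟩, fun v hv => ?_⟩
  · obtain ⟨n, hn⟩ := exists_intCast_eq_apply halt hl (hint hv)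
    exact (L.sub_mem_iff_left hv).mp (symplecticTransvection_sub_mem halt hl k hn)
  · obtain ⟨n, hn⟩ := exists_intCast_eq_apply halt hl (hint hv)
    rw [apply_symplecticTransvection] at hn
    exact (L.sub_mem_iff_right hv).mp (symplecticTransvection_sub_mem halt hl k hn)
  · simp only [symplecticTransvection_apply, map_add, map_smul, map_zsmul, LinearMap.add_apply,
      LinearMap.smul_apply, smul_eq_mul, zsmul_eq_mul, halt l, ← halt.neg l v]
    ring
  · obtain ⟨n, hn⟩ := exists_intCast_eq_apply halt hl hv
    exact symplecticTransvection_sub_mem halt hl k hn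

lemma add_zsmul_mem_orbit (halt : B.IsAlt) (hint : L ≤ dualLattice B L) (hl : l ∈ L) {n m : ℤ}
    (hlu : B l u = n) (hnm : n ∣ m) : u + m • l ∈ MulAction.orbit (gammaSubgroup B L) u := by
  obtain ⟨k, rfl⟩ := hnm
  refine mem_orbit_gammaSubgroup_iff.mpr ⟨_, inGamma_symplecticTransvection halt hint hl k, ?_⟩
  rw [symplecticTransvection_apply, hlu, Int.cast_smul_eq_zsmul, smul_smul]

lemma add_mem_orbit (halt : B.IsAlt) (hint : L ≤ dualLattice B L) (hl : l ∈ L) {n : ℤ}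
    (hlu : B l u = n) (hn : IsUnit n) : u + l ∈ MulAction.orbit (gammaSubgroup B L) u := by
  simpa using add_zsmul_mem_orbit halt hint hl hlu hn.dvd (m := 1)

end Transvection

section HyperbolicPlane

variable {e f u w : V}

lemma exists_mem_orbit_apply_eq_emod (halt : B.IsAlt) (hint : L ≤ dualLattice B L)
    (he : e ∈ L) (hf : f ∈ L) (hef : B e f = 1) {a b : ℤ} (ha : B f u = a) (hb : B e u = b) :
    ∃ w ∈ MulAction.orbit (gammaSubgroup B L) u, B e w = (a % b : ℤ) := by
  have hfe : B f e = -1 := by rw [← halt.neg, hef]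
  set k := a / b + 1
  set u' := u + (k * b) • e
  have hu' : u' ∈ MulAction.orbit (gammaSubgroup B L) u :=
    add_zsmul_mem_orbit halt hint he hb (dvd_mul_left b k)
  have hfu' : B f u' = (a - k * b : ℤ) := by simp [u', ha, hfe, sub_eq_add_neg]
  have heu' : B e u' = b := by simp [u', hb, halt e]
  refine ⟨u' + (a - k * b) • f, ?_, ?_⟩
  · rw [← MulAction.orbit_eq_iff.mpr hu']
    exact add_zsmul_mem_orbit halt hint hf hfu' dvd_rfl
  · rw [map_add, map_zsmul, hef, heu', zsmul_eq_mul, Int.emod_def]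
    push_cast [k]
    ring

lemma exists_mem_orbit_apply_eq_zero (halt : B.IsAlt) (hint : L ≤ dualLattice B L)
    (he : e ∈ L) (hf : f ∈ L) (hef : B e f = 1) (hu : u ∈ dualLattice B L) :
    ∃ w ∈ MulAction.orbit (gammaSubgroup B L) u, B e w = 0 := by
  obtain ⟨b, hb⟩ := exists_intCast_eq_apply halt he hu
  induction hm : b.natAbs using Nat.strong_induction_on generalizing u b with
  | _ m ih =>
    obtain rfl | hb0 := eq_or_ne b 0
    · exact ⟨u, MulAction.mem_orbit_self u, by simpa using hb⟩
    obtain ⟨a, ha⟩ := exists_intCast_eq_apply halt hf hu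
    obtain ⟨u', hu', heu'⟩ := exists_mem_orbit_apply_eq_emod halt hint he hf hef ha hb
    have hlt : (a % b).natAbs < m := by
      have := Int.emod_nonneg a hb0
      have := b.abs_eq_natAbs ▸ Int.emod_lt_abs a hb0
      omega
    obtain ⟨w, hw, hew⟩ := ih _ hlt (mem_dualLattice_of_mem_orbit hu' hu) _ heu' rfl
    exact ⟨w, MulAction.orbit_eq_iff.mpr hu' ▸ hw, hew⟩

lemma exists_mem_orbit_apply_eq_one (halt : B.IsAlt) (hint : L ≤ dualLattice B L)
    (he : e ∈ L) (hf : f ∈ L) (hef : B e f = 1) (hu : HasDiv B L u 1) :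
    ∃ w ∈ MulAction.orbit (gammaSubgroup B L) u, B f w = 1 := by
  have hfe : B f e = -1 := by rw [← halt.neg, hef]
  obtain ⟨u', hu', heu'⟩ :=
    exists_mem_orbit_apply_eq_zero halt hint he hf hef (hasDiv_one_iff.mp hu).1
  obtain ⟨hu'_dual, x, hx, hxu'⟩ := hasDiv_one_iff.mp (hasDiv_of_mem_orbit hu' hu)
  obtain ⟨a, ha⟩ := exists_intCast_eq_apply halt hf hu'_dual
  obtain ⟨c, hc⟩ := hint hf x hx
  -- As `(e, u') = 0`, adding a multiple of `e` to `x` changes `(f, l)` but not `(l, u') = -1`.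
  set l := x + (a + c - 1) • e
  have hl : l ∈ L := L.add_mem hx (L.smul_mem _ he)
  have hlu' : B l u' = (-1 : ℤ) := by simp [l, heu', ← halt.neg u' x, hxu']
  refine ⟨u' + l, ?_, ?_⟩
  · rw [← MulAction.orbit_eq_iff.mpr hu']
    exact add_mem_orbit halt hint hl hlu' (by simp)
  · simp only [l, map_add, map_zsmul, ha, hc, hfe, zsmul_eq_mul]
    push_cast
    ring

lemma mem_orbit_of_apply_eq_one (halt : B.IsAlt) (hint : L ≤ dualLattice B L) (hf : f ∈ L)
    (hu : u ∈ dualLattice B L) (hfu : B f u = 1) (hfw : B f w = 1) (hsub : w - u ∈ L) :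
    w ∈ MulAction.orbit (gammaSubgroup B L) u := by
  obtain ⟨c, hc⟩ := exists_intCast_eq_apply halt hsub hu
  set l := w - u + (1 - c) • f
  have hl : l ∈ L := L.add_mem hsub (L.smul_mem _ hf)
  have hlu : B l u = (1 : ℤ) := by
    rw [map_add, LinearMap.add_apply, hc]
    simp [hfu]
  have hfl : B f (u + l) = (1 : ℤ) := by simp [l, hfu, hfw, halt f]
  have hw : w = u + l + (c - 1) • f := by module
  rw [← MulAction.orbit_eq_iff.mpr (add_mem_orbit halt hint hl hlu isUnit_one), hw]
  exact add_zsmul_mem_orbit halt hint hf hfl (one_dvd _)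

lemma mem_orbit_of_hasDiv_one (halt : B.IsAlt) (hint : L ≤ dualLattice B L) (he : e ∈ L)
    (hf : f ∈ L) (hef : B e f = 1) (hu : HasDiv B L u 1) (hw : HasDiv B L w 1)
    (hsub : w - u ∈ L) : w ∈ MulAction.orbit (gammaSubgroup B L) u := by
  obtain ⟨u', hu', hfu'⟩ := exists_mem_orbit_apply_eq_one halt hint he hf hef hu
  obtain ⟨w', hw', hfw'⟩ := exists_mem_orbit_apply_eq_one halt hint he hf hef hw
  have hu_dual := (hasDiv_one_iff.mp hu).1
  have hw_dual := (hasDiv_one_iff.mp hw).1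
  have hsub' : w' - u' ∈ L := by
    have : w' - u' = (w' - w) + (w - u) - (u' - u) := by abel
    rw [this]
    exact L.sub_mem (L.add_mem (sub_mem_of_mem_orbit hw' hw_dual) hsub)
      (sub_mem_of_mem_orbit hu' hu_dual)
  have hw'u' := mem_orbit_of_apply_eq_one halt hint hf (mem_dualLattice_of_mem_orbit hu' hu_dual)
    hfu' hfw' hsub'
  rw [← MulAction.orbit_eq_iff] at hu' hw' hw'u' ⊢
  exact hw'.symm.trans (hw'u'.trans hu')

end HyperbolicPlane

section EichlerCriterion

variable {v w : V} {dv dw : ℕ}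

lemma discCls_vstar_eq_of_inGamma {γ : V ≃ₗ[ℚ] V} (hγ : InGamma B L γ)
    (hdv : HasDiv B L v dv) (hdw : HasDiv B L (γ v) dw) :
    discCls B L ⟨vstar v dv, vstar_mem hdv⟩ = discCls B L ⟨vstar (γ v) dw, vstar_mem hdw⟩ := by
  obtain rfl := (hdv.map_isometry hγ.1).unique hdw
  rw [discCls_eq_iff]
  simpa only [map_vstar] using hγ.2 _ (vstar_mem hdv)

lemma exists_inGamma_of_discCls_vstar_eq (halt : B.IsAlt) (hint : L ≤ dualLattice B L) {e f : V}
    (he : e ∈ L) (hf : f ∈ L) (hef : B e f = 1) (hv : IsPrimitive L v) (hw : IsPrimitive L w)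
    (hdv : HasDiv B L v dv) (hdw : HasDiv B L w dw)
    (h : discCls B L ⟨vstar v dv, vstar_mem hdv⟩ = discCls B L ⟨vstar w dw, vstar_mem hdw⟩) :
    ∃ γ : V ≃ₗ[ℚ] V, InGamma B L γ ∧ γ v = w := by
  obtain rfl : dv = dw := by
    rw [← hv.addOrderOf_discCls_vstar hdv, h, hw.addOrderOf_discCls_vstar hdw]
  obtain ⟨γ, hγ, hγv⟩ := mem_orbit_gammaSubgroup_iff.mp <| mem_orbit_of_hasDiv_one halt hint he hf
    hef hdv.hasDiv_one_vstar hdw.hasDiv_one_vstar (discCls_eq_iff.mp h)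
  refine ⟨γ, hγ, ?_⟩
  rw [← hdv.nsmul_vstar, map_nsmul, hγv, hdw.nsmul_vstar]

lemma exists_isPrimitive_discCls_vstar_eq (hspan : Submodule.span ℚ (L : Set V) = ⊤)
    (hint : L ≤ dualLattice B L) {e f : V} (he : e ∈ L) (hf : f ∈ L) (hef : B e f = 1)
    (x : DiscGroup B L) :
    ∃ (v : V) (d : ℕ) (_ : IsPrimitive L v) (hd : HasDiv B L v d),
      discCls B L ⟨vstar v d, vstar_mem hd⟩ = x := by
  obtain ⟨u, rfl⟩ := Submodule.Quotient.mk_surjective _ x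
  obtain ⟨a, ha⟩ := u.2 f hf
  have hae : (1 - a) • e ∈ L := L.smul_mem _ he
  have hu' : HasDiv B L (u + (1 - a) • e) 1 :=
    hasDiv_one_iff.mpr ⟨add_mem u.2 (hint hae), f, hf, by simp [ha, hef]⟩
  obtain ⟨v, d, hv, hd, hvd⟩ := exists_isPrimitive_vstar_eq hspan hint hu'
  refine ⟨v, d, hv, hd, (discCls_eq_iff.mpr ?_).symm⟩
  simpa [hvd] using hae

end EichlerCriterion

theorem symplectic_eichler_criterion_general (halt : B.IsAlt)
    (hspan : Submodule.span ℚ (L : Set V) = ⊤) (hint : L ≤ dualLattice B L) {e f : V}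
    (he : e ∈ L) (hf : f ∈ L) (hef : B e f = 1) :
    (∀ (v w : V) (dv dw : ℕ) (_ : IsPrimitive L v) (_ : IsPrimitive L w)
        (hdv : HasDiv B L v dv) (hdw : HasDiv B L w dw),
        (∃ γ : V ≃ₗ[ℚ] V, InGamma B L γ ∧ γ v = w) ↔
          discCls B L ⟨vstar v dv, vstar_mem hdv⟩ =
            discCls B L ⟨vstar w dw, vstar_mem hdw⟩) ∧
    (∀ x : DiscGroup B L, ∃ (v : V) (d : ℕ) (_ : IsPrimitive L v) (hd : HasDiv B L v d),
        discCls B L ⟨vstar v d, vstar_mem hd⟩ = x) := by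
  refine ⟨fun v w dv dw hv hw hdv hdw => ⟨?_, ?_⟩, ?_⟩
  · rintro ⟨γ, hγ, rfl⟩
    exact discCls_vstar_eq_of_inGamma hγ hdv hdw
  · exact exists_inGamma_of_discCls_vstar_eq halt hint he hf hef hv hw hdv hdw
  · exact exists_isPrimitive_discCls_vstar_eq hspan hint he hf hef

end SymplecticLattice

/-- **Symplectic Eichler criterion.** If `Λ = U₁ ⊕ U₂ ⊕ Λ''` (type with `d₁ = d₂ = 1`),
then `v ↦ [v*]` induces a bijection from the set of `Γ_Λ`-equivalence classes of
primitive vectors of `Λ` onto the discriminant group `D_Λ`. -/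
theorem symplectic_eichler_criterion
    (V : Type) [AddCommGroup V] [Module ℚ V]
    (B : V →ₗ[ℚ] V →ₗ[ℚ] ℚ)
    (halt : ∀ v, B v v = 0)
    (hnd : ∀ v : V, (∀ w, B v w = 0) → v = 0)
    (L : Submodule ℤ V) (hfg : L.FG)
    (hspan : Submodule.span ℚ (L : Set V) = ⊤)
    (hint : ∀ x ∈ L, ∀ y ∈ L, ∃ n : ℤ, B x y = (n : ℚ))
    (e₁ f₁ e₂ f₂ : V) (L'' : Submodule ℤ V)
    (hdec : OrthoDecompUU B L e₁ f₁ e₂ f₂ L'') :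
    (∀ (v w : V) (dv dw : ℕ) (hv : IsPrimitive L v) (hw : IsPrimitive L w)
        (hdv : HasDiv B L v dv) (hdw : HasDiv B L w dw),
        (∃ γ : V ≃ₗ[ℚ] V, InGamma B L γ ∧ γ v = w) ↔
          discCls B L ⟨vstar v dv, vstar_mem hdv⟩ =
            discCls B L ⟨vstar w dw, vstar_mem hdw⟩) ∧
    (∀ x : DiscGroup B L, ∃ (v : V) (d : ℕ) (hv : IsPrimitive L v) (hd : HasDiv B L v d),
        discCls B L ⟨vstar v d, vstar_mem hd⟩ = x) := by
  obtain ⟨he, hf, -, -, -, hef, -⟩ := hdec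
  exact symplectic_eichler_criterion_general halt hspan hint he hf hef
end

section
/- Let Λ = U ⊕ Λ' be a symplectic lattice with U spanned by e, f satisfying (e, f) = 1. Let v ∈ Λ' be a vector that is primitive in Λ with div(v) = d (computed in Λ). Then there exists γ ∈ Γ_Λ such that γ(v) = v + de. -/
/-!
Orthogonality of `l` and `m` makes the transvection `T_{l,m}` unipotent and symplectic, with
inverse `T_{l,-m}`; if moreover `l, m ∈ Λ`, it moves every `w ∈ Λ^∨` by a vector of `Λ`, so it lies
in `Γ_Λ`. Choose `x ∈ Λ` with `(v, x) = d`. The vector `m = (e, x)f - x` is orthogonal to `e` and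
`(m, v) = (v, x)`, so `T_{e,m}` sends `v` to `v + de`.
-/

section Transvection

variable {V : Type} [AddCommGroup V] [Module ℚ V] {B : V →ₗ[ℚ] V →ₗ[ℚ] ℚ} {L : Submodule ℤ V}
  {l m w x y : V}

lemma apply_smul_mem_of_mem_dualLattice (hw : w ∈ dualLattice B L) (hx : x ∈ L) (hy : y ∈ L) :
    B w x • y ∈ L := by
  obtain ⟨n, hn⟩ := hw x hx
  rw [hn, Int.cast_smul_eq_zsmul]
  exact L.smul_mem n hy

lemma transvection_apply (B : V →ₗ[ℚ] V →ₗ[ℚ] ℚ) (l m w : V) :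
    transvection B l m w = w + B l w • m + B m w • l := rfl

lemma transvection_neg_right_comp_transvection (hB : B.IsAlt) (hlm : B l m = 0) :
    transvection B l (-m) ∘ₗ transvection B l m = LinearMap.id := by
  ext w
  have hml : B m l = 0 := hB.isRefl l m hlm
  simp only [LinearMap.comp_apply, LinearMap.id_apply, transvection_apply, map_add, map_smul,
    map_neg, LinearMap.neg_apply, hB.self_eq_zero, hlm, hml]
  module

lemma apply_transvection_transvection (hB : B.IsAlt) (hlm : B l m = 0) (x y : V) :
    B (transvection B l m x) (transvection B l m y) = B x y := by
  have hml : B m l = 0 := hB.isRefl l m hlm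
  simp only [transvection_apply, map_add, map_smul, LinearMap.add_apply, LinearMap.smul_apply,
    smul_eq_mul, hB.self_eq_zero, hlm, hml, ← hB.neg x l, ← hB.neg x m]
  ring

lemma transvection_sub_self_mem (hB : B.IsAlt) (hl : l ∈ L) (hm : m ∈ L)
    (hw : w ∈ dualLattice B L) : transvection B l m w - w ∈ L := by
  have hmove : transvection B l m w - w = -(B w l • m + B w m • l) := by
    rw [transvection_apply, ← hB.neg w l, ← hB.neg w m]
    module
  rw [hmove]
  exact L.neg_mem <| L.add_mem (apply_smul_mem_of_mem_dualLattice hw hl hm)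
    (apply_smul_mem_of_mem_dualLattice hw hm hl)

lemma transvection_mem (hB : B.IsAlt) (hint : L ≤ dualLattice B L) (hl : l ∈ L) (hm : m ∈ L)
    (hw : w ∈ L) : transvection B l m w ∈ L :=
  (L.sub_mem_iff_left hw).mp (transvection_sub_self_mem hB hl hm (hint hw))

/-- The transvection `T_{l,m}` along orthogonal vectors `l` and `m`, as a linear automorphism with
inverse `T_{l,-m}`. -/
noncomputable def transvectionEquiv (hB : B.IsAlt) (hlm : B l m = 0) : V ≃ₗ[ℚ] V :=
  LinearEquiv.ofLinearMap (transvection B l m) (transvection B l (-m))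
    (by
      have hlm' : B l (-m) = 0 := by rw [map_neg, hlm, neg_zero]
      simpa only [neg_neg] using transvection_neg_right_comp_transvection hB hlm')
    (transvection_neg_right_comp_transvection hB hlm)

lemma inGamma_transvectionEquiv (hB : B.IsAlt) (hint : L ≤ dualLattice B L) (hl : l ∈ L)
    (hm : m ∈ L) (hlm : B l m = 0) : InGamma B L (transvectionEquiv hB hlm) := by
  refine ⟨⟨fun w => ⟨transvection_mem hB hint hl hm, fun hw => ?_⟩,
    apply_transvection_transvection hB hlm⟩, fun w => transvection_sub_self_mem hB hl hm⟩
  rw [← (transvectionEquiv hB hlm).symm_apply_apply w]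
  exact transvection_mem hB hint hl (L.neg_mem hm) hw

end Transvection

theorem gamma_translate_by_de_general {V : Type} [AddCommGroup V] [Module ℚ V]
    {B : V →ₗ[ℚ] V →ₗ[ℚ] ℚ} (hB : B.IsAlt) {L : Submodule ℤ V} (hint : L ≤ dualLattice B L)
    {e f v x : V} (he : e ∈ L) (hf : f ∈ L) (hef : B e f = 1) (hev : B e v = 0) (hfv : B f v = 0)
    (hx : x ∈ L) :
    ∃ γ : V ≃ₗ[ℚ] V, InGamma B L γ ∧ γ v = v + B v x • e := by
  let m := B e x • f - x
  have hm : m ∈ L := L.sub_mem (apply_smul_mem_of_mem_dualLattice (hint he) hx hf) hx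
  have hem : B e m = 0 := by simp [m, hef]
  have hmv : B m v = B v x := by simp [m, hfv, hB.neg]
  refine ⟨transvectionEquiv hB hem, inGamma_transvectionEquiv hB hint he hm hem, ?_⟩
  calc transvection B e m v = v + B e v • m + B m v • e := transvection_apply B e m v
    _ = v + B v x • e := by rw [hev, hmv, zero_smul, add_zero]

/-- **Step 1.** If `Λ = U ⊕ Λ'` with `U = ⟨e, f⟩`, `(e,f) = 1`, and `v ∈ Λ'` is
primitive in `Λ` with `div(v) = d`, then there is `γ ∈ Γ_Λ` with `γ(v) = v + de`. -/
theorem gamma_translate_by_de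
    (V : Type) [AddCommGroup V] [Module ℚ V]
    (B : V →ₗ[ℚ] V →ₗ[ℚ] ℚ)
    (halt : ∀ v, B v v = 0)
    (hnd : ∀ v : V, (∀ w, B v w = 0) → v = 0)
    (L : Submodule ℤ V) (hfg : L.FG)
    (hspan : Submodule.span ℚ (L : Set V) = ⊤)
    (hint : ∀ x ∈ L, ∀ y ∈ L, ∃ n : ℤ, B x y = (n : ℚ))
    (e f : V) (L' : Submodule ℤ V)
    (hdec : OrthoDecompU B L e f L')
    (v : V) (hv' : v ∈ L') (hv : IsPrimitive L v) (d : ℕ) (hd : HasDiv B L v d) :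
    ∃ γ : V ≃ₗ[ℚ] V, InGamma B L γ ∧ γ v = v + (d : ℤ) • e := by
  obtain ⟨he, hf, -, hef, horth, -⟩ := hdec
  obtain ⟨-, -, x, hx, hvx⟩ := hd
  simpa [hvx, Nat.cast_smul_eq_nsmul] using
    gamma_translate_by_de_general halt hint he hf hef (horth v hv').1 (horth v hv').2 hx
end
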